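/- Assume 2 ≤ k ≤ m, ρ < 4π, ρ > 4π(1 + α_i) for every 1 ≤ i ≤ k, ρ < 4π(1 + α_i) for every k + 1 ≤ i ≤ m, and ρ < 4π((1 + α_i) + (1 + α_j)) for every pair of indices 1 ≤ i < j ≤ m. Then Σ_{ρ,α}, endowed with the weak topology, is a nonempty topological space that is not contractible (it has exactly k ≥ 2 connected components, each reduced to a single Dirac mass δ_{p_i}). -/

import Mathlib

open MeasureTheory Metric
open scoped NNReal ENNReal BigOperators Classical

variable {X : Type*}

/-- The weighted cardinality function `χ` (for `p` injective). -/
noncomputable def chi {m : ℕ} (p : Fin m → X) (α : Fin m → ℝ) (q : X) : ℝ :=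
  1 + ∑ j, if p j = q then α j else 0

/-- The space of formal barycenters `Σ_{ρ,α}`, as a set of probability measures (endowed,
as a subspace of `ProbabilityMeasure X`, with the topology of weak convergence). -/
noncomputable def Bar [MetricSpace X] [MeasurableSpace X] {m : ℕ} (p : Fin m → X)
    (α : Fin m → ℝ) (ρ : ℝ) : Set (ProbabilityMeasure X) :=
  {μ | ∃ (J : Finset X) (t : X → ℝ≥0),
    (∑ q ∈ J, t q) = 1 ∧
    4 * Real.pi * (∑ q ∈ J, chi p α q) < ρ ∧
    (μ : Measure X) = ∑ q ∈ J, ((t q : ℝ≥0∞) • Measure.dirac q)}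

lemma chi_p {m : ℕ} (p : Fin m → X) (hp : Function.Injective p) (α : Fin m → ℝ) (i : Fin m) :
    chi p α (p i) = 1 + α i := by
  simp [chi, hp.eq_iff]

lemma chi_ne {m : ℕ} (p : Fin m → X) (α : Fin m → ℝ) (q : X) (h : ∀ j, p j ≠ q) :
    chi p α q = 1 := by
  simp [chi, h]

/-- under the stated algebraic conditions (with `k ≥ 2`), the space
`Σ_{ρ,α}` with the weak topology is nonempty and not contractible. -/
theorem barycenters_k_points_not_contractible
    [MetricSpace X] [CompactSpace X] [Infinite X] [MeasurableSpace X] [BorelSpace X]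
    {m : ℕ} (hm : 1 ≤ m) (p : Fin m → X) (hp : Function.Injective p)
    (α : Fin m → ℝ) (hα : ∀ j, -1 < α j ∧ α j < 0) (hmono : Monotone α)
    (ρ : ℝ) (hρ : 0 < ρ)
    (k : ℕ) (hk2 : 2 ≤ k) (hkm : k ≤ m)
    (hρ4 : ρ < 4 * Real.pi)
    (hlow : ∀ i : Fin m, (i : ℕ) < k → 4 * Real.pi * (1 + α i) < ρ)
    (hhigh : ∀ i : Fin m, k ≤ (i : ℕ) → ρ < 4 * Real.pi * (1 + α i))
    (hpair : ∀ i j : Fin m, i < j → ρ < 4 * Real.pi * ((1 + α i) + (1 + α j))) :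
    Nonempty ↥(Bar p α ρ) ∧ ¬ ContractibleSpace ↥(Bar p α ρ) := by
  have hpi := Real.pi_pos
  have hpos : ∀ q, 0 ≤ chi p α q := by
    intro q
    by_cases h : ∃ j, p j = q
    · obtain ⟨j, rfl⟩ := h
      rw [chi_p p hp]
      linarith [(hα j).1]
    · push Not at h
      rw [chi_ne p α q h]
      norm_num
  let d : Fin m → ProbabilityMeasure X := fun i => ⟨Measure.dirac (p i), inferInstance⟩
  have hsub : Bar p α ρ ⊆ Set.range d := by
    rintro μ ⟨J, t, ht, hJ, hμ⟩
    have hin : ∀ q ∈ J, ∃ j, p j = q := by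
      intro q hq
      by_contra h
      push Not at h
      have h1 := Finset.single_le_sum (f := chi p α) (fun q _ => hpos q) hq
      rw [chi_ne p α q h] at h1
      nlinarith
    have hone : ∀ q ∈ J, ∀ q' ∈ J, q = q' := by
      intro q hq q' hq'
      obtain ⟨i, rfl⟩ := hin q hq
      obtain ⟨j, rfl⟩ := hin q' hq'
      by_contra hne
      have hij : i ≠ j := fun h => hne (by rw [h])
      have h1 : ∑ q ∈ ({p i, p j} : Finset X), chi p α q ≤ ∑ q ∈ J, chi p α q := by
        apply Finset.sum_le_sum_of_subset_of_nonneg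
        · intro x hx
          simp only [Finset.mem_insert, Finset.mem_singleton] at hx
          rcases hx with rfl | rfl <;> assumption
        · intro q _ _
          exact hpos q
      rw [Finset.sum_pair hne, chi_p p hp, chi_p p hp] at h1
      have h2 : ρ < 4 * Real.pi * ((1 + α i) + (1 + α j)) := by
        rcases lt_or_gt_of_ne hij with h | h
        · exact hpair i j h
        · rw [add_comm (1 + α i)]
          exact hpair j i h
      nlinarith
    have hJne : J.Nonempty := by
      rw [Finset.nonempty_iff_ne_empty]
      rintro rfl
      simp at ht
    obtain ⟨q, hq⟩ := hJne
    obtain ⟨i, rfl⟩ := hin q hq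
    have hJe : J = {p i} := by
      ext x
      rw [Finset.mem_singleton]
      exact ⟨fun hx => hone x hx _ hq, fun hx => hx ▸ hq⟩
    subst hJe
    refine ⟨i, ?_⟩
    apply Subtype.ext
    simp only [Finset.sum_singleton] at ht hμ
    change Measure.dirac (p i) = (μ : Measure X)
    rw [hμ, ht]
    simp
  have hmem : ∀ i : Fin m, (i : ℕ) < k → d i ∈ Bar p α ρ := by
    intro i hi
    refine ⟨{p i}, fun _ => 1, by simp, ?_, ?_⟩
    · rw [Finset.sum_singleton, chi_p p hp]
      exact hlow i hi
    · simp [d]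
  let i0 : Fin m := ⟨0, by omega⟩
  let i1 : Fin m := ⟨1, by omega⟩
  have m0 := hmem i0 (by simp only [i0]; omega)
  have m1 := hmem i1 (by simp only [i1]; omega)
  refine ⟨⟨⟨_, m0⟩⟩, fun hc => ?_⟩
  have : Finite ↥(Bar p α ρ) := ((Set.finite_range d).subset hsub).to_subtype
  have hs : Subsingleton ↥(Bar p α ρ) := PreconnectedSpace.trivial_of_discrete
  have he := congrArg (fun μ : ↥(Bar p α ρ) => ((μ : ProbabilityMeasure X) : Measure X))
    (hs.elim ⟨_, m0⟩ ⟨_, m1⟩)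
  have he' : Measure.dirac (p i0) = Measure.dirac (p i1) := he
  have hpe : p i0 = p i1 := dirac_eq_dirac_iff.mp he'
  have := hp hpe
  simp [i0, i1] at this
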